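/- The language T = L ∩ (ΣΣ)^* ∩ R, where L is the set of binary words that are not abelian squares, (ΣΣ)^* is the set of even-length binary words, and R = (1000)^*(100)(10)^*(100)(100)^*, is not context-free. -/

import Mathlib

/-- k-fold concatenation of a word -/
def pw (u : List Bool) (k : ℕ) : List Bool := (List.replicate k u).flatten

/-- a block of `s` zeros -/
def zeros (s : ℕ) : List Bool := List.replicate s false

/-- `w` is an abelian square: `w = s ++ t` with `t` a permutation of `s`
(equivalently over a binary alphabet: equal length and equal number of 1's). -/
def IsAbelianSquare (w : List Bool) : Prop :=
  ∃ s t : List Bool, w = s ++ t ∧ s.length = t.length ∧ s.count true = t.count true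

def w4 : List Bool := [true, false, false, false]
def w3 : List Bool := [true, false, false]
def w2 : List Bool := [true, false]

/-- the word z = (1000)^n (100) (10)^(n!+n) (100) (100)^(2(n!+n)) -/
def Z (n : ℕ) : List Bool :=
  pw w4 n ++ w3 ++ pw w2 (n.factorial + n) ++ w3 ++ pw w3 (2 * (n.factorial + n))

/-- membership in the regular language R = (1000)^* (100) (10)^* (100) (100)^* -/
def InR (w : List Bool) : Prop :=
  ∃ a b c : ℕ, w = pw w4 a ++ w3 ++ pw w2 b ++ w3 ++ pw w3 c

/-- the gap sequence `[s_0, s_1, ..., s_k]` of `w = 0^{s_0} 1 0^{s_1} 1 ⋯ 1 0^{s_k}` -/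
def gaps (w : List Bool) : List ℕ := (w.splitOn true).map List.length

/-- `alt w` = number of indices `1 ≤ i < k` with `s_i ≠ s_{i+1}` -/
def alt (w : List Bool) : ℕ :=
  ((gaps w).tail.zip (gaps w).tail.tail).countP (fun p => decide (p.1 ≠ p.2))

/-- writing `w = 0^{s_1} 1 0^{s_2} 1 ⋯ 0^{s_k} 1 0^{s_{k+1}}` (with k ones),
the cyclic sequence `(s_1 + s_{k+1}, s_2, …, s_k)` -/
def cyclicGaps (w : List Bool) : List ℕ :=
  ((gaps w).headI + (gaps w).getLast!) :: (gaps w).tail.dropLast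

/-- `w` (containing a 1) is uneven: the cyclic gap sequence has length > 1 and
two cyclically adjacent unequal entries (equivalently it is not constant) -/
def Uneven (w : List Bool) : Prop :=
  2 ≤ w.count true ∧ ¬ (cyclicGaps w).Chain' (· = ·)

/-- `w` (containing a 1) is even if it is not uneven -/
def EvenWord (w : List Bool) : Prop := true ∈ w ∧ ¬ Uneven w

/-! Pair the nonterminals of a grammar for `T` with the states of an automaton for `R`. The factors
pumped in a long derivation are then loops of that automaton, and a loop cannot leave its group of
blocks. Hence pumping that adds blocks `1000` leaves the number of blocks `10` or the number of
blocks `100` in the last group unchanged, and an even number of repetitions changes the other one by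
an even amount. The number of blocks `1000` gained per repetition divides some `d` that depends on
the grammar only. So for `n` large and `N = n + 2 * d`, the word with exponents `(n, N, 2 * N)`
pumps to one with exponents `(N, N + 2 * j, 2 * N)` or `(N, N, 2 * N + 2 * k)`, an abelian
square. -/

section Runs

variable {α σ : Type*} (δ : σ → α → σ)

/-- The transitions `(state, letter)` used by the deterministic transition function `δ` while
reading a word from a given state. The state reached at the end is `List.foldl δ`. -/
def transitions : σ → List α → List (σ × α)
  | _, [] => []
  | p, a :: w => (p, a) :: transitions (δ p a) w

/-- The number of marked transitions along a run. These play the role of the marked positions of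
Ogden's lemma. -/
def markedCount (mark : σ × α → Bool) (p : σ) (w : List α) : ℕ :=
  (transitions δ p w).countP mark

/-- `LoopRun δ p₀ u v x y p q`: when `u v x y` is read from the state `p₀`, the factor `v` is a loop
at the state `p` and `y` is a loop at the state `q`. -/
structure LoopRun (p₀ : σ) (u v x y : List α) (p q : σ) : Prop where
  foldl_prefix : u.foldl δ p₀ = p
  foldl_left : v.foldl δ p = p
  foldl_middle : x.foldl δ p = q
  foldl_right : y.foldl δ q = q

theorem transitions_append (p : σ) (u v : List α) :
    transitions δ p (u ++ v) = transitions δ p u ++ transitions δ (u.foldl δ p) v := by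
  induction u generalizing p with
  | nil => rfl
  | cons a u ih => simp only [List.cons_append, transitions, ih, List.foldl_cons]

theorem foldl_flatten_replicate {p : σ} {v : List α} (hv : v.foldl δ p = p) (k : ℕ) :
    (List.replicate k v).flatten.foldl δ p = p := by
  induction k with
  | zero => rfl
  | succ k ih => rw [List.replicate_succ, List.flatten_cons, List.foldl_append, hv, ih]

theorem le_level_le_of_mem_transitions {β : Type*} [Preorder β] {level : σ → β}
    (hlevel : ∀ p a, level p ≤ level (δ p a)) {p : σ} {w : List α} {e : σ × α}
    (he : e ∈ transitions δ p w) : level p ≤ level e.1 ∧ level e.1 ≤ level (w.foldl δ p) := by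
  have level_le_foldl (w : List α) (p : σ) : level p ≤ level (w.foldl δ p) := by
    induction w generalizing p with
    | nil => exact le_rfl
    | cons a w ih => exact (hlevel p a).trans (ih _)
  induction w generalizing p with
  | nil => simp only [transitions, List.not_mem_nil] at he
  | cons a w ih =>
    rcases List.mem_cons.1 he with rfl | he
    · exact ⟨le_rfl, level_le_foldl (a :: w) p⟩
    · exact ⟨(hlevel p a).trans (ih he).1, (ih he).2⟩

theorem level_eq_of_mem_transitions_loop {β : Type*} [PartialOrder β] {level : σ → β}
    (hlevel : ∀ p a, level p ≤ level (δ p a)) {p : σ} {w : List α} (hw : w.foldl δ p = p)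
    {e : σ × α} (he : e ∈ transitions δ p w) : level e.1 = level p := by
  obtain ⟨hle, hge⟩ := le_level_le_of_mem_transitions δ hlevel he
  exact le_antisymm (hw ▸ hge) hle

variable (mark : σ × α → Bool)

theorem markedCount_append (p : σ) (u v : List α) :
    markedCount δ mark p (u ++ v) =
      markedCount δ mark p u + markedCount δ mark (u.foldl δ p) v := by
  simp only [markedCount, transitions_append, List.countP_append]

theorem markedCount_singleton_le (p : σ) (a : α) : markedCount δ mark p [a] ≤ 1 :=
  List.countP_le_length

theorem markedCount_flatten_replicate {p : σ} {v : List α} (hv : v.foldl δ p = p) (k : ℕ) :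
    markedCount δ mark p (List.replicate k v).flatten = k * markedCount δ mark p v := by
  induction k with
  | zero => simp [markedCount, transitions]
  | succ k ih =>
    rw [List.replicate_succ, List.flatten_cons, markedCount_append, hv, ih]
    ring

variable {δ} in
theorem LoopRun.markedCount_pump {p₀ p q : σ} {u v x y : List α} (h : LoopRun δ p₀ u v x y p q)
    (z : List α) (i : ℕ) :
    markedCount δ mark p₀
        (u ++ (List.replicate i v).flatten ++ x ++ (List.replicate i y).flatten ++ z) =
      markedCount δ mark p₀ (u ++ x ++ z) +
        i * (markedCount δ mark p v + markedCount δ mark q y) := by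
  simp only [markedCount_append, List.foldl_append, h.foldl_prefix, h.foldl_middle,
    foldl_flatten_replicate δ h.foldl_left, foldl_flatten_replicate δ h.foldl_right,
    markedCount_flatten_replicate δ mark h.foldl_left,
    markedCount_flatten_replicate δ mark h.foldl_right]
  ring

end Runs

section Yields

variable {α : Type*} (g : ContextFreeGrammar α)

/-- `Yields g s w`: there is a forest of derivation trees of `g` whose roots spell the sentential
form `s` and whose leaves spell `w`. Unlike `g.Derives`, it admits structural induction on
derivation trees. -/
inductive Yields : List (Symbol α g.NT) → List α → Prop
  | nil : Yields [] []
  | terminal (a : α) {s : List (Symbol α g.NT)} {w : List α} :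
      Yields s w → Yields (.terminal a :: s) (a :: w)
  | nonterminal {r : ContextFreeRule α g.NT} {s : List (Symbol α g.NT)} {w₁ w₂ : List α} :
      r ∈ g.rules → Yields r.output w₁ → Yields s w₂ →
      Yields (.nonterminal r.input :: s) (w₁ ++ w₂)

variable {g}

theorem Yields.append {s₁ s₂ : List (Symbol α g.NT)} {w₁ w₂ : List α}
    (h₁ : Yields g s₁ w₁) (h₂ : Yields g s₂ w₂) : Yields g (s₁ ++ s₂) (w₁ ++ w₂) := by
  induction h₁ with
  | nil => exact h₂
  | terminal a _ ih => exact .terminal a ih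
  | nonterminal hr ho _ _ ih =>
    rw [List.append_assoc]
    exact .nonterminal hr ho ih

theorem Yields.exists_of_append {s₁ s₂ : List (Symbol α g.NT)} {w : List α}
    (h : Yields g (s₁ ++ s₂) w) :
    ∃ w₁ w₂, w = w₁ ++ w₂ ∧ Yields g s₁ w₁ ∧ Yields g s₂ w₂ := by
  induction s₁ generalizing w with
  | nil => exact ⟨[], w, rfl, .nil, h⟩
  | cons X s₁ ih =>
    cases h with
    | terminal a h =>
      obtain ⟨w₁, w₂, rfl, h₁, h₂⟩ := ih h
      exact ⟨a :: w₁, w₂, rfl, .terminal a h₁, h₂⟩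
    | @nonterminal r _ w' _ hr ho h =>
      obtain ⟨w₁, w₂, rfl, h₁, h₂⟩ := ih h
      exact ⟨w' ++ w₁, w₂, (List.append_assoc ..).symm, .nonterminal hr ho h₁, h₂⟩

theorem derives_append {s₁ s₂ t₁ t₂ : List (Symbol α g.NT)}
    (h₁ : g.Derives s₁ t₁) (h₂ : g.Derives s₂ t₂) : g.Derives (s₁ ++ s₂) (t₁ ++ t₂) :=
  (h₁.append_right s₂).trans (h₂.append_left t₁)

theorem derives_output {r : ContextFreeRule α g.NT} (hr : r ∈ g.rules) :
    g.Derives [.nonterminal r.input] r.output :=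
  ContextFreeGrammar.Produces.single ⟨r, hr, .input_output⟩

theorem Yields.derives {s : List (Symbol α g.NT)} {w : List α} (h : Yields g s w) :
    g.Derives s (w.map .terminal) := by
  induction h with
  | nil => rfl
  | terminal a _ ih => exact ih.append_left [.terminal a]
  | nonterminal hr _ _ ih₁ ih₂ =>
    rw [List.map_append]
    exact derives_append ((derives_output hr).trans ih₁) ih₂

theorem yields_of_derives {s : List (Symbol α g.NT)} {w : List α}
    (h : g.Derives s (w.map .terminal)) : Yields g s w := by
  induction h using Relation.ReflTransGen.head_induction_on with
  | refl =>
    induction w with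
    | nil => exact .nil
    | cons a w ih => exact .terminal a ih
  | head hstep _ ih =>
    obtain ⟨r, hr, hrewrite⟩ := hstep
    obtain ⟨s₁, s₂, rfl, rfl⟩ := hrewrite.exists_parts
    obtain ⟨w', w₂, rfl, h', h₂⟩ := ih.exists_of_append
    obtain ⟨w₁, w, rfl, h₁, h⟩ := h'.exists_of_append
    have hnode : Yields g [.nonterminal r.input] w := by
      simpa only [List.append_nil] using Yields.nonterminal hr h .nil
    exact (h₁.append hnode).append h₂

theorem derives_pump {s : List (Symbol α g.NT)} {v x y : List α}
    (hvy : g.Derives s (v.map .terminal ++ s ++ y.map .terminal))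
    (hx : g.Derives s (x.map .terminal)) (i : ℕ) :
    g.Derives s
      (((List.replicate i v).flatten ++ x ++ (List.replicate i y).flatten).map .terminal) := by
  induction i with
  | zero => simpa using hx
  | succ i ih =>
    rw [List.replicate_succ, List.replicate_succ']
    simpa using hvy.trans ((ih.append_left (v.map .terminal)).append_right (y.map .terminal))

variable (g) in
/-- The sentential forms that label the nodes of a derivation tree once each list of children is
peeled off one symbol at a time, which makes the tree binary. There are finitely many. -/
def suffixForms : Set (List (Symbol α g.NT)) :=
  {s | s <:+ [.nonterminal g.initial] ∨ ∃ r ∈ g.rules, s <:+ r.output}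

variable (g) in
theorem finite_suffixForms : (suffixForms g).Finite := by
  have finite_suffixes (s : List (Symbol α g.NT)) : {s' | s' <:+ s}.Finite := by
    simpa only [List.mem_tails] using s.tails.finite_toSet
  have hrules : {s | ∃ r ∈ g.rules, s <:+ r.output}.Finite :=
    (g.rules.finite_toSet.biUnion fun r _ => finite_suffixes r.output).subset
      fun _ ⟨_, hr, hs⟩ => Set.mem_biUnion hr hs
  exact (finite_suffixes _).union hrules

theorem mem_suffixForms_of_cons {X : Symbol α g.NT} {s : List (Symbol α g.NT)}
    (h : X :: s ∈ suffixForms g) : s ∈ suffixForms g :=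
  h.imp (List.suffix_cons X s).trans fun ⟨r, hr, hs⟩ => ⟨r, hr, (List.suffix_cons X s).trans hs⟩

theorem output_mem_suffixForms {r : ContextFreeRule α g.NT} (hr : r ∈ g.rules) :
    r.output ∈ suffixForms g :=
  .inr ⟨r, hr, List.suffix_rfl⟩

end Yields

section Contexts

variable {α σ : Type*} {g : ContextFreeGrammar α} (δ : σ → α → σ)

/-- A sentential form together with the states before and after the word derived from it: the
analogue of the nonterminals `(p, A, q)` of the grammar for the intersection of a context-free
language with a regular one. -/
@[ext]
structure SpannedForm (g : ContextFreeGrammar α) (σ : Type*) where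
  form : List (Symbol α g.NT)
  src : σ
  tgt : σ

/-- `IsContext δ t t' u z`: the form of `t` derives `u s' z`, where `s'` is the form of `t'`,
compatibly with the states of `t` and `t'`. -/
structure IsContext (t t' : SpannedForm g σ) (u z : List α) : Prop where
  derives : g.Derives t.form (u.map .terminal ++ t'.form ++ z.map .terminal)
  foldl_left : u.foldl δ t.src = t'.src
  foldl_right : z.foldl δ t'.tgt = t.tgt

/-- `OccursIn δ t' t w`: some derivation of the word `w` from `t` passes through `t'`. -/
def OccursIn (t' t : SpannedForm g σ) (w : List α) : Prop :=
  ∃ u x z, w = u ++ x ++ z ∧ IsContext δ t t' u z ∧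
    g.Derives t'.form (x.map .terminal) ∧ x.foldl δ t'.src = t'.tgt

variable {δ} {t t' t'' : SpannedForm g σ} {u u' z z' w : List α}

theorem IsContext.trans (h : IsContext δ t t' u z) (h' : IsContext δ t' t'' u' z') :
    IsContext δ t t'' (u ++ u') (z' ++ z) where
  derives := by
    simpa using h.derives.trans
      ((h'.derives.append_left (u.map .terminal)).append_right (z.map .terminal))
  foldl_left := by rw [List.foldl_append, h.foldl_left, h'.foldl_left]
  foldl_right := by rw [List.foldl_append, h'.foldl_right, h.foldl_right]

theorem OccursIn.of_isContext (h : IsContext δ t t' u z) (h' : OccursIn δ t'' t' w) :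
    OccursIn δ t'' t (u ++ w ++ z) := by
  obtain ⟨u', x, z', rfl, hc, hx⟩ := h'
  exact ⟨u ++ u', x, z' ++ z, by simp only [List.append_assoc], h.trans hc, hx⟩

variable (δ) (mark : σ × α → Bool)

/-- Some context of `t'` in `t` reads a marked transition. -/
def HasMarkedContext (t t' : SpannedForm g σ) : Prop :=
  ∃ u z, IsContext δ t t' u z ∧ 0 < markedCount δ mark t.src u + markedCount δ mark t'.tgt z

/-- The suffix forms with all possible pairs of states: the finite set in which the pigeonhole
argument of the pumping lemma takes place. -/
def suffixSpans (g : ContextFreeGrammar α) (σ : Type*) : Set (SpannedForm g σ) :=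
  {t | t.form ∈ suffixForms g}

/-- The number of spanned suffix forms below `t` through a marked context. It bounds the number of
marked branchings along a path down from `t` as long as no form has a marked context in itself. -/
noncomputable def markedRank (t : SpannedForm g σ) : ℕ :=
  {t' ∈ suffixSpans g σ | HasMarkedContext δ mark t t'}.ncard

theorem finite_suffixSpans [Finite σ] (g : ContextFreeGrammar α) : (suffixSpans g σ).Finite := by
  refine Set.Finite.of_finite_image (f := fun t => (t.form, t.src, t.tgt)) ?_ ?_
  · refine ((finite_suffixForms g).prod (Set.finite_univ (α := σ × σ))).subset ?_
    rintro _ ⟨t, ht, rfl⟩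
    exact ⟨ht, trivial⟩
  · intro t _ t' _ h
    simpa [SpannedForm.ext_iff] using h

variable {δ mark}

theorem IsContext.hasMarkedContext_trans (h : IsContext δ t t' u z)
    (h' : HasMarkedContext δ mark t' t'') : HasMarkedContext δ mark t t'' := by
  obtain ⟨u', z', hc, hpos⟩ := h'
  refine ⟨u ++ u', z' ++ z, h.trans hc, ?_⟩
  rw [markedCount_append, markedCount_append, h.foldl_left]
  omega

theorem IsContext.markedRank_le [Finite σ] (h : IsContext δ t t' u z) :
    markedRank δ mark t' ≤ markedRank δ mark t :=
  Set.ncard_le_ncard (fun _ ht => ⟨ht.1, h.hasMarkedContext_trans ht.2⟩)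
    ((finite_suffixSpans g).subset fun _ ht => ht.1)

theorem HasMarkedContext.markedRank_lt [Finite σ] (h : HasMarkedContext δ mark t t')
    (hmem : t' ∈ suffixSpans g σ) (hirrefl : ¬ HasMarkedContext δ mark t' t') :
    markedRank δ mark t' < markedRank δ mark t := by
  have ⟨u, z, hc, _⟩ := h
  refine Set.ncard_lt_ncard ⟨fun _ ht => ⟨ht.1, hc.hasMarkedContext_trans ht.2⟩, fun hsub => ?_⟩
    ((finite_suffixSpans g).subset fun _ ht => ht.1)
  exact hirrefl (hsub ⟨hmem, h⟩).2

theorem markedRank_le_ncard_suffixSpans [Finite σ] (t : SpannedForm g σ) :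
    markedRank δ mark t ≤ (suffixSpans g σ).ncard :=
  Set.ncard_le_ncard (fun _ ht => ht.1) (finite_suffixSpans g)

variable (δ mark) in
/-- No suffix form occurring in a derivation of `w` from `t` has a marked context in itself, so
that no marked transition of `w` can be pumped. -/
def LoopFree (t : SpannedForm g σ) (w : List α) : Prop :=
  ∀ t' ∈ suffixSpans g σ, OccursIn δ t' t w → ¬ HasMarkedContext δ mark t' t'

theorem LoopFree.of_isContext (h : LoopFree δ mark t (u ++ w ++ z)) (hc : IsContext δ t t' u z) :
    LoopFree δ mark t' w :=
  fun t'' hmem hocc => h t'' hmem (hocc.of_isContext hc)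

theorem LoopFree.markedRank_lt [Finite σ] (h : LoopFree δ mark t (u ++ w ++ z))
    (hc : IsContext δ t t' u z) (hmem : t' ∈ suffixSpans g σ)
    (hw : g.Derives t'.form (w.map .terminal)) (htgt : w.foldl δ t'.src = t'.tgt)
    (hpos : 0 < markedCount δ mark t.src u + markedCount δ mark t'.tgt z) :
    markedRank δ mark t' < markedRank δ mark t :=
  HasMarkedContext.markedRank_lt ⟨u, z, hc, hpos⟩ hmem (h t' hmem ⟨u, w, z, rfl, hc, hw, htgt⟩)

theorem isContext_tail {X : Symbol α g.NT} {s : List (Symbol α g.NT)} {w₁ : List α}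
    (hX : g.Derives [X] (w₁.map .terminal)) (p q : σ) :
    IsContext δ ⟨X :: s, p, q⟩ ⟨s, w₁.foldl δ p, q⟩ w₁ [] :=
  ⟨by simpa using hX.append_right s, rfl, rfl⟩

theorem isContext_output {r : ContextFreeRule α g.NT} (hr : r ∈ g.rules)
    {s : List (Symbol α g.NT)} {w₂ : List α} (hs : g.Derives s (w₂.map .terminal)) (p q : σ) :
    IsContext δ ⟨.nonterminal r.input :: s, p, w₂.foldl δ q⟩ ⟨r.output, p, q⟩ [] w₂ :=
  ⟨derives_append (derives_output hr) hs, rfl, rfl⟩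

end Contexts

section Pumping

variable {α σ : Type*} {g : ContextFreeGrammar α} {δ : σ → α → σ} {mark : σ × α → Bool}

theorem add_le_two_pow {c₁ c₂ r₁ r₂ r : ℕ} (h₁ : c₁ ≤ 2 ^ r₁) (h₂ : c₂ ≤ 2 ^ r₂)
    (hr₁ : r₁ ≤ r) (hr₂ : r₂ ≤ r) (hlt : 0 < c₁ → 0 < c₂ → r₁ < r ∧ r₂ < r) :
    c₁ + c₂ ≤ 2 ^ r := by
  rcases c₁.eq_zero_or_pos with rfl | hc₁
  · simpa using h₂.trans (Nat.pow_le_pow_right two_pos hr₂)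
  rcases c₂.eq_zero_or_pos with rfl | hc₂
  · simpa using h₁.trans (Nat.pow_le_pow_right two_pos hr₁)
  obtain ⟨hlt₁, hlt₂⟩ := hlt hc₁ hc₂
  obtain ⟨k, rfl⟩ := Nat.exists_eq_add_of_lt hlt₁
  have h₁' : c₁ ≤ 2 ^ (r₁ + k) := h₁.trans (Nat.pow_le_pow_right two_pos (by omega))
  have h₂' : c₂ ≤ 2 ^ (r₁ + k) := h₂.trans (Nat.pow_le_pow_right two_pos (by omega))
  rw [pow_succ]
  omega

theorem Yields.markedCount_le [Finite σ] {s : List (Symbol α g.NT)} {w : List α}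
    (h : Yields g s w) (hs : s ∈ suffixForms g) (p : σ)
    (hfree : LoopFree δ mark ⟨s, p, w.foldl δ p⟩ w) :
    markedCount δ mark p w ≤ 2 ^ markedRank δ mark ⟨s, p, w.foldl δ p⟩ := by
  induction h generalizing p with
  | nil => exact Nat.zero_le _
  | @terminal a s w hw ih =>
    have htail : IsContext δ ⟨.terminal a :: s, p, w.foldl δ (δ p a)⟩
        ⟨s, δ p a, w.foldl δ (δ p a)⟩ [a] [] := isContext_tail (w₁ := [a]) (.refl _) p _
    have hs' := mem_suffixForms_of_cons hs
    have hfree' : LoopFree δ mark ⟨.terminal a :: s, p, w.foldl δ (δ p a)⟩ ([a] ++ w ++ []) := by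
      rwa [List.append_nil]
    rw [← List.singleton_append, markedCount_append]
    refine add_le_two_pow (r₁ := 0) (markedCount_singleton_le δ mark p a)
      (ih hs' _ (hfree'.of_isContext htail)) (Nat.zero_le _) htail.markedRank_le fun hpos _ => ?_
    have hlt := hfree'.markedRank_lt htail hs' hw.derives rfl (Nat.add_pos_left hpos _)
    exact ⟨Nat.zero_lt_of_lt hlt, hlt⟩
  | @nonterminal r s w₁ w₂ hr hout hw ih₁ ih₂ =>
    have hhead := isContext_output (δ := δ) hr hw.derives p (w₁.foldl δ p)
    have htail := isContext_tail (δ := δ) (s := s)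
      ((derives_output hr).trans hout.derives) p (w₂.foldl δ (w₁.foldl δ p))
    have hout' := output_mem_suffixForms hr
    have hs' := mem_suffixForms_of_cons hs
    rw [List.foldl_append] at hfree ⊢
    have hfree' : LoopFree δ mark ⟨.nonterminal r.input :: s, p, w₂.foldl δ (w₁.foldl δ p)⟩
        (w₁ ++ w₂ ++ []) := by
      rwa [List.append_nil]
    rw [markedCount_append]
    refine add_le_two_pow (ih₁ hout' p (hfree.of_isContext hhead))
      (ih₂ hs' _ (hfree'.of_isContext htail)) hhead.markedRank_le htail.markedRank_le
      fun hpos₁ hpos₂ => ⟨?_, ?_⟩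
    · exact hfree.markedRank_lt hhead hout' hout.derives rfl (Nat.add_pos_right _ hpos₂)
    · exact hfree'.markedRank_lt htail hs' hw.derives rfl (Nat.add_pos_left hpos₁ _)

theorem exists_hasMarkedContext_self [Finite σ] {w : List α} (hw : w ∈ g.language) (p : σ)
    (hlarge : 2 ^ (suffixSpans g σ).ncard < markedCount δ mark p w) :
    ∃ t ∈ suffixSpans g σ, HasMarkedContext δ mark t t ∧
      OccursIn δ t ⟨[.nonterminal g.initial], p, w.foldl δ p⟩ w := by
  by_contra! hfree
  have hle := (yields_of_derives hw).markedCount_le (δ := δ) (mark := mark)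
    (.inl List.suffix_rfl) p fun t hmem hocc hloop => hfree t hmem hloop hocc
  have hrank := Nat.pow_le_pow_right two_pos
    (markedRank_le_ncard_suffixSpans (δ := δ) (mark := mark)
      ⟨[Symbol.nonterminal g.initial], p, w.foldl δ p⟩)
  omega

variable (δ mark) in
theorem exists_common_multiple_markedContexts [Finite σ] (g : ContextFreeGrammar α) :
    ∃ d > 0, ∀ t ∈ suffixSpans g σ, HasMarkedContext δ mark t t →
      ∃ v y, IsContext δ t t v y ∧
        markedCount δ mark t.src v + markedCount δ mark t.tgt y ∣ d := by
  let loops := {t ∈ suffixSpans g σ | HasMarkedContext δ mark t t}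
  have hfin : loops.Finite := (finite_suffixSpans g).subset fun _ ht => ht.1
  choose v y hcontext hpos using fun t : loops => t.2.2
  let weight (t : loops) : ℕ :=
    markedCount δ mark t.1.src (v t) + markedCount δ mark t.1.tgt (y t)
  have := hfin.fintype
  exact ⟨∏ t, weight t, Finset.prod_pos fun t _ => hpos t, fun t hmem hloop =>
    ⟨v ⟨t, hmem, hloop⟩, y ⟨t, hmem, hloop⟩, hcontext ⟨t, hmem, hloop⟩,
      Finset.dvd_prod_of_mem weight (Finset.mem_univ ⟨t, hmem, hloop⟩)⟩⟩

/-- In Ogden's lemma the pumped loops are factors of `w`; here they are inserted into `w` and are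
drawn from a finite list fixed by the grammar, whence the uniform `d`. -/
theorem exists_pump_of_isContextFree [Finite σ] {L : Language α} (hL : L.IsContextFree)
    (p₀ : σ) :
    ∃ K d : ℕ, 0 < d ∧ ∀ w ∈ L, K < markedCount δ mark p₀ w →
      ∃ (u v x y z : List α) (p q : σ), w = u ++ x ++ z ∧ LoopRun δ p₀ u v x y p q ∧
        markedCount δ mark p v + markedCount δ mark q y ∣ d ∧
        ∀ i, u ++ (List.replicate i v).flatten ++ x ++ (List.replicate i y).flatten ++ z ∈ L := by
  obtain ⟨g, rfl⟩ := hL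
  obtain ⟨d, hd, hdvd⟩ := exists_common_multiple_markedContexts δ mark g
  refine ⟨2 ^ (suffixSpans g σ).ncard, d, hd, fun w hw hlarge => ?_⟩
  obtain ⟨t, hmem, hloop, u, x, z, rfl, hroot, hx, hx'⟩ := exists_hasMarkedContext_self hw p₀ hlarge
  obtain ⟨v, y, hvy, hdvd⟩ := hdvd t hmem hloop
  refine ⟨u, v, x, y, z, t.src, t.tgt, rfl,
    ⟨hroot.foldl_left, hvy.foldl_left, hx', hvy.foldl_right⟩, hdvd, fun i => ?_⟩
  have hpump := derives_pump hvy.derives hx i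
  have := hroot.derives.trans
    ((hpump.append_left (u.map .terminal)).append_right (z.map .terminal))
  simpa using this

end Pumping

section Blocks

/-- The states of a deterministic automaton reading `(1000)^* (100) (10)^* (100) (100)^*`. The
states `a₀, …, a₃` are the positions in a block `1000`, `b₀, b₁` those in a block `10`, and
`c₀, c₁, c₂` those in a block `100`. Since `100` and `10` agree up to their third letter, the first
separator `100` is read as far as `a₃`, and the second one as a block `10` followed by a `0`. -/
inductive BlockState
  | a₀ | a₁ | a₂ | a₃ | b₀ | b₁ | c₀ | c₁ | c₂ | sink
  deriving DecidableEq

open BlockState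

instance : Fintype BlockState where
  elems := {a₀, a₁, a₂, a₃, b₀, b₁, c₀, c₁, c₂, sink}
  complete p := by cases p <;> decide

/-- The transition function of the automaton with states `BlockState`. -/
def blockStep : BlockState → Bool → BlockState
  | a₀, true => a₁
  | a₁, false => a₂
  | a₂, false => a₃
  | a₃, false => a₀
  | a₃, true => b₁
  | b₁, false => b₀
  | b₀, true => b₁
  | b₀, false => c₀
  | c₀, true => c₁
  | c₁, false => c₂
  | c₂, false => c₀
  | _, _ => sink

/-- The index of the group of blocks to which a state belongs. It cannot decrease along a run, so
that a loop stays within one group. -/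
def blockLevel : BlockState → ℕ
  | a₀ | a₁ | a₂ | a₃ => 0
  | b₀ | b₁ => 1
  | c₀ | c₁ | c₂ => 2
  | sink => 3

/-- For each of the three kinds of blocks, a transition used exactly once per block. -/
def blockEdge : Fin 3 → BlockState × Bool :=
  ![(a₃, false), (b₀, true), (c₂, false)]

/-- The number of blocks `1000`, `10` or `100`, for `i = 0, 1, 2`, read along a run. -/
def blockCount (i : Fin 3) : BlockState → List Bool → ℕ :=
  markedCount blockStep (· == blockEdge i)

theorem blockCount_append (i : Fin 3) (p : BlockState) (u v : List Bool) :
    blockCount i p (u ++ v) = blockCount i p u + blockCount i (u.foldl blockStep p) v :=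
  markedCount_append blockStep _ p u v

theorem blockLevel_le_blockStep : ∀ p b, blockLevel p ≤ blockLevel (blockStep p b) := by
  decide

theorem blockLevel_eq_of_blockCount_ne_zero {i : Fin 3} {p : BlockState} {v : List Bool}
    (hv : v.foldl blockStep p = p) (hi : blockCount i p v ≠ 0) : blockLevel p = i := by
  obtain ⟨e, he, heq⟩ := List.countP_pos_iff.1 (Nat.pos_of_ne_zero hi)
  have blockLevel_blockEdge : ∀ j, blockLevel (blockEdge j).1 = j := by decide
  rw [← blockLevel_blockEdge i, ← beq_iff_eq.1 heq,
    level_eq_of_mem_transitions_loop blockStep blockLevel_le_blockStep hv he]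

theorem blockCount_eq_zero_of_loopRun {u v x y : List Bool} {p q : BlockState}
    (h : LoopRun blockStep a₀ u v x y p q) (h₀ : blockCount 0 p v + blockCount 0 q y ≠ 0) :
    blockCount 1 p v + blockCount 1 q y = 0 ∨ blockCount 2 p v + blockCount 2 q y = 0 := by
  have hp (i : Fin 3) := blockLevel_eq_of_blockCount_ne_zero (i := i) h.foldl_left
  have hq (i : Fin 3) := blockLevel_eq_of_blockCount_ne_zero (i := i) h.foldl_right
  have hp₀ := hp 0
  have hp₁ := hp 1
  have hp₂ := hp 2
  have hq₀ := hq 0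
  have hq₁ := hq 1
  have hq₂ := hq 2
  simp only [Fin.val_zero, Fin.val_one, Fin.val_two] at hp₀ hp₁ hp₂ hq₀ hq₁ hq₂
  omega

/-- The word `(1000)^a (100) (10)^b (100) (100)^c`, the general element of `R`. -/
def blockWord (a b c : ℕ) : List Bool :=
  pw w4 a ++ w3 ++ pw w2 b ++ w3 ++ pw w3 c

theorem pw_succ (u : List Bool) (k : ℕ) : pw u (k + 1) = u ++ pw u k := by
  simp only [pw, List.replicate_succ, List.flatten_cons]

theorem pw_add (u : List Bool) (k l : ℕ) : pw u (k + l) = pw u k ++ pw u l := by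
  simp only [pw, List.replicate_add, List.flatten_append]

theorem length_pw (u : List Bool) (k : ℕ) : (pw u k).length = k * u.length := by
  simp [pw]

theorem count_true_pw (u : List Bool) (k : ℕ) : (pw u k).count true = k * u.count true := by
  simp [pw, List.count_flatten]

theorem count_true_w4 : w4.count true = 1 := rfl

theorem count_true_w3 : w3.count true = 1 := rfl

theorem count_true_w2 : w2.count true = 1 := rfl

theorem length_blockWord (a b c : ℕ) : (blockWord a b c).length = 4 * a + 2 * b + 3 * c + 6 := by
  simp only [blockWord, length_pw, w4, w3, w2, List.length_append, List.length_cons,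
    List.length_nil]
  ring

theorem count_true_blockWord (a b c : ℕ) : (blockWord a b c).count true = a + b + c + 2 := by
  simp only [blockWord, List.count_append, count_true_pw, count_true_w4, count_true_w3,
    count_true_w2]
  ring

theorem blockWord_eq (a b c : ℕ) :
    blockWord a b c = pw w4 a ++ (w3 ++ w2) ++ pw w2 b ++ [false] ++ pw w3 c := by
  have pw_comm : pw w2 b ++ w2 = w2 ++ pw w2 b := by
    rw [← pw_succ, pw_add]
    rfl
  calc blockWord a b c = pw w4 a ++ w3 ++ (pw w2 b ++ w2) ++ [false] ++ pw w3 c := by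
        simp only [blockWord, w3, w2, List.append_assoc, List.cons_append, List.nil_append]
    _ = pw w4 a ++ (w3 ++ w2) ++ pw w2 b ++ [false] ++ pw w3 c := by
        rw [pw_comm]
        simp only [List.append_assoc]

theorem blockCount_blockWord (i : Fin 3) (a b c : ℕ) :
    blockCount i a₀ (blockWord a b c) = ![a, b, c] i := by
  have read_w4 : (pw w4 a).foldl blockStep a₀ = a₀ := foldl_flatten_replicate blockStep rfl a
  have read_sep : w2.foldl blockStep (w3.foldl blockStep a₀) = b₀ := rfl
  have read_w2 : (pw w2 b).foldl blockStep b₀ = b₀ := foldl_flatten_replicate blockStep rfl b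
  have read_false : [false].foldl blockStep b₀ = c₀ := rfl
  have count_w4 : blockCount i a₀ (pw w4 a) = a * blockCount i a₀ w4 :=
    markedCount_flatten_replicate blockStep _ rfl a
  have count_w2 : blockCount i b₀ (pw w2 b) = b * blockCount i b₀ w2 :=
    markedCount_flatten_replicate blockStep _ rfl b
  have count_w3 : blockCount i c₀ (pw w3 c) = c * blockCount i c₀ w3 :=
    markedCount_flatten_replicate blockStep _ rfl c
  have count_block : blockCount i a₀ w4 = ![1, 0, 0] i ∧ blockCount i b₀ w2 = ![0, 1, 0] i ∧
      blockCount i c₀ w3 = ![0, 0, 1] i := by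
    fin_cases i <;> decide
  have count_sep : blockCount i a₀ (w3 ++ w2) = 0 ∧ blockCount i b₀ [false] = 0 := by
    fin_cases i <;> decide
  calc blockCount i a₀ (blockWord a b c)
    _ = a * ![1, 0, 0] i + b * ![0, 1, 0] i + c * ![0, 0, 1] i := by
        rw [blockWord_eq, blockCount_append, blockCount_append, blockCount_append,
          blockCount_append]
        simp only [List.foldl_append, read_w4, read_sep, read_w2, read_false, count_w4, count_w2,
          count_w3, count_block, count_sep, add_zero]
    _ = ![a, b, c] i := by
        fin_cases i <;> simp

theorem LoopRun.blockWord_pump {u v x y z : List Bool} {p q : BlockState} {i : ℕ}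
    {a b c a' b' c' : ℕ} (h : LoopRun blockStep a₀ u v x y p q)
    (hw : blockWord a b c = u ++ x ++ z)
    (hw' : u ++ (List.replicate i v).flatten ++ x ++ (List.replicate i y).flatten ++ z =
      blockWord a' b' c') :
    a' = a + i * (blockCount 0 p v + blockCount 0 q y) ∧
      b' = b + i * (blockCount 1 p v + blockCount 1 q y) ∧
      c' = c + i * (blockCount 2 p v + blockCount 2 q y) := by
  have hcount (j : Fin 3) :
      ![a', b', c'] j = ![a, b, c] j + i * (blockCount j p v + blockCount j q y) := by
    rw [← blockCount_blockWord, ← blockCount_blockWord, hw, ← hw']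
    exact h.markedCount_pump _ z i
  exact ⟨hcount 0, hcount 1, hcount 2⟩

theorem isAbelianSquare_blockWord_middle (a j : ℕ) :
    IsAbelianSquare (blockWord a (a + 2 * j) (2 * a)) := by
  refine ⟨pw w4 a ++ w3 ++ pw w2 (a + j), pw w2 j ++ w3 ++ pw w3 (2 * a), ?_, ?_, ?_⟩
  · rw [blockWord, two_mul j, ← add_assoc, pw_add]
    simp only [List.append_assoc]
  · simp only [length_pw, w4, w3, w2, List.length_append, List.length_cons, List.length_nil]
    ring
  · simp only [List.count_append, count_true_pw, count_true_w4, count_true_w3, count_true_w2]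
    ring

theorem isAbelianSquare_blockWord_last (a j : ℕ) :
    IsAbelianSquare (blockWord a a (2 * a + 2 * j)) := by
  refine ⟨pw w4 a ++ w3 ++ pw w2 a ++ pw w3 j, pw w3 (2 * a + j + 1), ?_, ?_, ?_⟩
  · have split_last : w3 ++ pw w3 (2 * a + 2 * j) = pw w3 j ++ pw w3 (2 * a + j + 1) := by
      rw [← pw_succ, ← pw_add]
      congr 1
      ring
    rw [blockWord, List.append_assoc _ w3, split_last, ← List.append_assoc]
  · simp only [length_pw, w4, w3, w2, List.length_append, List.length_cons, List.length_nil]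
    ring
  · simp only [List.count_append, count_true_pw, count_true_w4, count_true_w3, count_true_w2]
    ring

theorem three_mul_count_true_le_of_suffix_pw {k : ℕ} {t : List Bool} (h : t <:+ pw w3 k) :
    3 * t.count true ≤ t.length := by
  induction k with
  | zero =>
    obtain rfl := List.suffix_nil.1 h
    rfl
  | succ k ih =>
    have hcount : (pw w3 k).count true = k := by rw [count_true_pw, count_true_w3, mul_one]
    have hlength : (pw w3 k).length = k * 3 := length_pw w3 k
    have hblock : pw w3 (k + 1) = true :: false :: false :: pw w3 k := pw_succ w3 k
    simp only [hblock, List.suffix_cons_iff] at h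
    rcases h with rfl | rfl | rfl | h
    · grind
    · grind
    · grind
    · exact ih h

theorem not_isAbelianSquare_blockWord {a b c : ℕ} (hab : a < b) (hc : 4 * a + 2 * b ≤ 3 * c) :
    ¬ IsAbelianSquare (blockWord a b c) := by
  rintro ⟨s, t, hst, hlength, hcount⟩
  have hlength_st : s.length + t.length = 4 * a + 2 * b + 3 * c + 6 := by
    rw [← List.length_append, ← hst, length_blockWord]
  have hcount_st : s.count true + t.count true = a + b + c + 2 := by
    rw [← List.count_append, ← hst, count_true_blockWord]
  have hlast : pw w3 (c + 1) <:+ blockWord a b c :=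
    ⟨pw w4 a ++ w3 ++ pw w2 b, by simp only [pw_succ, blockWord, List.append_assoc]⟩
  have hlength_last : (pw w3 (c + 1)).length = (c + 1) * 3 := length_pw w3 (c + 1)
  have ht : t <:+ pw w3 (c + 1) :=
    List.suffix_of_suffix_length_le ⟨s, hst.symm⟩ hlast (by omega)
  have hsparse := three_mul_count_true_le_of_suffix_pw ht
  omega

end Blocks

theorem stmt11 :
    ¬ Language.IsContextFree
      {w : List Bool | ¬ IsAbelianSquare w ∧ Even w.length ∧ InR w} := by
  intro hL
  obtain ⟨K, d, hd, hpump⟩ :=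
    exists_pump_of_isContextFree (δ := blockStep) (mark := (· == blockEdge 0)) hL .a₀
  let n := K + 1
  let N := n + 2 * d
  have hnot : ¬ IsAbelianSquare (blockWord n N (2 * N)) :=
    not_isAbelianSquare_blockWord (by omega) (by omega)
  have heven : Even (blockWord n N (2 * N)).length :=
    length_blockWord n N (2 * N) ▸ ⟨2 * n + N + 3 * N + 3, by ring⟩
  have hmany : K < blockCount 0 .a₀ (blockWord n N (2 * N)) :=
    (blockCount_blockWord 0 n N (2 * N)).symm ▸ K.lt_succ_self
  obtain ⟨u, v, x, y, z, p, q, hw, hloop, ⟨m, hm : d = (blockCount 0 p v + blockCount 0 q y) * m⟩,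
    hpumped⟩ := hpump _ ⟨hnot, heven, n, N, 2 * N, rfl⟩ hmany
  obtain ⟨hsquare, -, a, b, c, hR : _ = blockWord a b c⟩ := hpumped (2 * m)
  obtain ⟨ha, hb, hc⟩ := hloop.blockWord_pump hw hR
  have haN : a = N := by rw [ha, mul_assoc, mul_comm m, ← hm]
  rw [hR, haN, hb, hc, mul_assoc, mul_assoc] at hsquare
  rcases blockCount_eq_zero_of_loopRun hloop (left_ne_zero_of_mul (hm ▸ hd.ne')) with h₁ | h₂
  · rw [h₁, mul_zero, mul_zero, add_zero] at hsquare
    exact hsquare (isAbelianSquare_blockWord_last N _)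
  · rw [h₂, mul_zero, mul_zero, add_zero] at hsquare
    exact hsquare (isAbelianSquare_blockWord_middle N _)
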